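/- For any game G with no cycle of total weight zero, any subset X of vertices, any val ∈ {MP, supΣ^X, infΣ^X}, and any vertex v, the optimal strategies realizing the val-value can be chosen independently of the starting vertex: there exist a single positional Min-strategy σ* and a single positional Max-strategy τ* such that for every vertex v, sup_{π ⊨ σ*, π from v} val(π) = inf_{π ⊨ τ*, π from v} val(π) = the val-value of v. -/

import Mathlib

/-!
Basic definitions for mean-payoff games: games, infinite paths, positional
strategies, the valuations MP, supΣ^X and infΣ^X, values of vertices,
zones N, P, ZN, ZP (also relative to a sub-arena), reduced games,
potentials and potential reductions, traps.
-/

/-- A game: a sinkless directed graph with integer weights, whose vertices are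
partitioned into Min-vertices (`IsMin`) and Max-vertices (`¬ IsMin`). -/
structure MPGame (V : Type*) where
  E : V → V → Prop
  w : V → V → ℤ
  IsMin : V → Prop
  sinkless : ∀ v, ∃ v', E v v'

namespace MPGame

variable {V : Type*}

/-- An infinite path in a game. -/
structure Path (G : MPGame V) where
  vert : ℕ → V
  adj : ∀ i, G.E (vert i) (vert (i + 1))

/-- The sum of the weights of the first `k` edges of a path. -/
def Path.wsum {G : MPGame V} (π : G.Path) (k : ℕ) : ℤ :=
  ∑ i ∈ Finset.range k, G.w (π.vert i) (π.vert (i + 1))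

/-- The tail of a path (drop the first vertex). -/
def Path.tail {G : MPGame V} (π : G.Path) : G.Path :=
  ⟨fun i => π.vert (i + 1), fun i => π.adj (i + 1)⟩

/-- A positional strategy `σ : V → V` is legal if it always follows an edge. -/
def Legal (G : MPGame V) (σ : V → V) : Prop := ∀ v, G.E v (σ v)

/-- Consistency of a path with a positional Min-strategy. -/
def Path.ConsMin {G : MPGame V} (π : G.Path) (σ : V → V) : Prop :=
  ∀ i, G.IsMin (π.vert i) → π.vert (i + 1) = σ (π.vert i)

/-- Consistency of a path with a positional Max-strategy. -/
def Path.ConsMax {G : MPGame V} (π : G.Path) (τ : V → V) : Prop :=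
  ∀ i, ¬ G.IsMin (π.vert i) → π.vert (i + 1) = τ (π.vert i)

/-- The mean-payoff valuation `MP(π) = limsup_k (1/k) ∑_{i<k} w_i`. -/
noncomputable def MP {G : MPGame V} (π : G.Path) : EReal :=
  Filter.limsup (fun k => (((π.wsum k : ℝ) / (k : ℝ)) : EReal)) Filter.atTop

/-- `supΣ^X(π) = sup_{k ≤ n_X} ∑_{i<k} w_i`, where `n_X` is the first hitting
time of `X` (all `k` if `X` is never hit). -/
noncomputable def supSigma {G : MPGame V} (X : Set V) (π : G.Path) : EReal :=
  ⨆ k : {k : ℕ // ∀ i < k, π.vert i ∉ X}, ((π.wsum k.1 : ℝ) : EReal)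

/-- `infΣ^X(π) = inf_{k ≤ n_X} ∑_{i<k} w_i`. -/
noncomputable def infSigma {G : MPGame V} (X : Set V) (π : G.Path) : EReal :=
  ⨅ k : {k : ℕ // ∀ i < k, π.vert i ∉ X}, ((π.wsum k.1 : ℝ) : EReal)

/-- `inf_σ sup_{π ⊨ σ, π from v} val(π)`, over legal positional Min-strategies. -/
noncomputable def minVal (G : MPGame V) (val : G.Path → EReal) (v : V) : EReal :=
  ⨅ σ : {σ : V → V // G.Legal σ},
    ⨆ π : {π : G.Path // π.vert 0 = v ∧ π.ConsMin σ.1}, val π.1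

/-- `sup_τ inf_{π ⊨ τ, π from v} val(π)`, over legal positional Max-strategies. -/
noncomputable def maxVal (G : MPGame V) (val : G.Path → EReal) (v : V) : EReal :=
  ⨆ τ : {τ : V → V // G.Legal τ},
    ⨅ π : {π : G.Path // π.vert 0 = v ∧ π.ConsMax τ.1}, val π.1

/-- The MP-value of a vertex. -/
noncomputable def MPval (G : MPGame V) (v : V) : EReal := G.minVal MP v

/-- The `supΣ^X`-value of a vertex. -/
noncomputable def supSigmaVal (G : MPGame V) (X : Set V) (v : V) : EReal :=
  G.minVal (supSigma X) v

/-- The `infΣ^X`-value of a vertex. -/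
noncomputable def infSigmaVal (G : MPGame V) (X : Set V) (v : V) : EReal :=
  G.minVal (infSigma X) v

/-- `G` has no cycle of total weight zero: no path repeats a vertex with the
same partial sum of weights. -/
def NoZeroCycle (G : MPGame V) : Prop :=
  ∀ (π : G.Path) (i j : ℕ), i < j → π.vert i = π.vert j → π.wsum i ≠ π.wsum j

/-- The zone `N` of the subgame of `G` induced on `D`: vertices whose
immediately optimal edges (within `D`) have weight `< 0`. -/
def NsetOn (G : MPGame V) (D : Set V) : Set V :=
  {v | v ∈ D ∧ ((G.IsMin v ∧ ∃ v' ∈ D, G.E v v' ∧ G.w v v' < 0) ∨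
      (¬ G.IsMin v ∧ ∀ v' ∈ D, G.E v v' → G.w v v' < 0))}

/-- The zone `P` of the subgame of `G` induced on `D`. -/
def PsetOn (G : MPGame V) (D : Set V) : Set V :=
  {v | v ∈ D ∧ ((¬ G.IsMin v ∧ ∃ v' ∈ D, G.E v v' ∧ 0 < G.w v v') ∨
      (G.IsMin v ∧ ∀ v' ∈ D, G.E v v' → 0 < G.w v v'))}

/-- The zone `N` of `G`. -/
def Nset (G : MPGame V) : Set V := G.NsetOn Set.univ

/-- The zone `P` of `G`. -/
def Pset (G : MPGame V) : Set V := G.PsetOn Set.univ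

/-- The zone `ZN` of the subgame of `G` induced on `D`: vertices from which
Min can force that an edge of weight `< 0` is visited before any edge of
weight `> 0` (staying within `D`). -/
inductive ZNr (G : MPGame V) (D : Set V) : V → Prop
  | minNeg (v v' : V) : v ∈ D → G.IsMin v → v' ∈ D → G.E v v' → G.w v v' < 0 →
      ZNr G D v
  | minZero (v v' : V) : v ∈ D → G.IsMin v → v' ∈ D → G.E v v' → G.w v v' = 0 →
      ZNr G D v' → ZNr G D v
  | max (v : V) : v ∈ D → ¬ G.IsMin v →
      (∀ v' ∈ D, G.E v v' → G.w v v' ≤ 0) →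
      (∀ v', v' ∈ D → G.E v v' → G.w v v' = 0 → ZNr G D v') →
      ZNr G D v

/-- The zone `ZP` of the subgame of `G` induced on `D`. -/
inductive ZPr (G : MPGame V) (D : Set V) : V → Prop
  | maxPos (v v' : V) : v ∈ D → ¬ G.IsMin v → v' ∈ D → G.E v v' → 0 < G.w v v' →
      ZPr G D v
  | maxZero (v v' : V) : v ∈ D → ¬ G.IsMin v → v' ∈ D → G.E v v' → G.w v v' = 0 →
      ZPr G D v' → ZPr G D v
  | min (v : V) : v ∈ D → G.IsMin v →
      (∀ v' ∈ D, G.E v v' → 0 ≤ G.w v v') →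
      (∀ v', v' ∈ D → G.E v v' → G.w v v' = 0 → ZPr G D v') →
      ZPr G D v

/-- The zone `ZN` of `G`. -/
def ZN (G : MPGame V) : V → Prop := G.ZNr Set.univ

/-- The zone `ZP` of `G`. -/
def ZP (G : MPGame V) : V → Prop := G.ZPr Set.univ

/-- The subgame of `G` induced on `D` is reduced: from every vertex of `ZN`,
Min can force that the first edge visited has weight `≤ 0` and leads into
`ZN`, and symmetrically for `ZP` and Max. -/
def ReducedOn (G : MPGame V) (D : Set V) : Prop :=
  (∀ v, G.ZNr D v →
     (G.IsMin v → ∃ v' ∈ D, G.E v v' ∧ G.w v v' ≤ 0 ∧ G.ZNr D v') ∧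
     (¬ G.IsMin v → ∀ v' ∈ D, G.E v v' → G.w v v' ≤ 0 ∧ G.ZNr D v')) ∧
  (∀ v, G.ZPr D v →
     (¬ G.IsMin v → ∃ v' ∈ D, G.E v v' ∧ 0 ≤ G.w v v' ∧ G.ZPr D v') ∧
     (G.IsMin v → ∀ v' ∈ D, G.E v v' → 0 ≤ G.w v v' ∧ G.ZPr D v'))

/-- `G` is reduced. -/
def Reduced (G : MPGame V) : Prop := G.ReducedOn Set.univ

/-- The subgame of `G` induced on `D` is positively reduced: `ZN = ∅`. -/
def PosReducedOn (G : MPGame V) (D : Set V) : Prop := ∀ v, ¬ G.ZNr D v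

/-- `A` is a trap for Min: a sinkless subgraph from which Min cannot escape. -/
def TrapForMin (G : MPGame V) (A : Set V) : Prop :=
  (∀ v ∈ A, ∃ v' ∈ A, G.E v v') ∧
  ∀ v ∈ A, G.IsMin v → ∀ v', G.E v v' → v' ∈ A

/-- `A` is a trap for Max: a sinkless subgraph from which Max cannot escape. -/
def TrapForMax (G : MPGame V) (A : Set V) : Prop :=
  (∀ v ∈ A, ∃ v' ∈ A, G.E v v') ∧
  ∀ v ∈ A, ¬ G.IsMin v → ∀ v', G.E v v' → v' ∈ A

/-- The potential reduction of `G` by the potential `φ`. -/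
def pot (G : MPGame V) (φ : V → ℤ) : MPGame V where
  E := G.E
  w := fun v v' => G.w v v' + φ v' - φ v
  IsMin := G.IsMin
  sinkless := G.sinkless

end MPGame

/-!
For a discount factor `c < 1` the optimality equations have a solution `f`, by the contraction
principle, and moves that are optimal for `f` form a positional strategy profile. There are
finitely many profiles, so one profile `ρ` is optimal for a sequence of discount factors tending
to `1`, and `ρ` is optimal from every vertex in the undiscounted game.

* Mean payoff: along a play in which Min follows `ρ`, the limit `g` of `(1 - c) f` is
  nonincreasing and `wᵢ ≤ f vᵢ - f vᵢ₊₁ + (1 - c) f vᵢ₊₁`. Summing, the weights grow at rate at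
  most `g v₀ + ε`. The same argument with the inequalities reversed serves Max.
* `supΣ^X`: allow the play to stop for the payoff `0` at any time, and force it to stop in `X`.
  A play in which Min follows `ρ` has discounted partial sums at most `f v₀`. A play in which Max
  follows `ρ` and whose partial sums are at most `S` has `f v₀ ≤ S`, because
  `hᵢ = f vᵢ - (S - wsum i)` is bounded above and satisfies `hᵢ ≤ max 0 (c hᵢ₊₁)`.
* `infΣ^X` is `-supΣ^X` in the game with the players exchanged and the weights negated.
-/

namespace MPGame

open Filter Topology
open scoped NNReal

variable {V : Type*} {G : MPGame V}

theorem Path.wsum_zero (π : G.Path) : π.wsum 0 = 0 := Finset.sum_range_zero _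

theorem Path.wsum_succ (π : G.Path) (k : ℕ) :
    π.wsum (k + 1) = π.wsum k + G.w (π.vert k) (π.vert (k + 1)) :=
  Finset.sum_range_succ _ _

theorem Path.cast_wsum (π : G.Path) (k : ℕ) :
    (π.wsum k : ℝ) = ∑ i ∈ Finset.range k, (G.w (π.vert i) (π.vert (i + 1)) : ℝ) :=
  Int.cast_sum _ _

theorem exists_path_consMin_consMax {σ τ : V → V} (hσ : G.Legal σ) (hτ : G.Legal τ) (v : V) :
    ∃ π : G.Path, π.vert 0 = v ∧ π.ConsMin σ ∧ π.ConsMax τ := by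
  classical
  let ρ : V → V := fun v => if G.IsMin v then σ v else τ v
  have hρ : G.Legal ρ := fun v => by
    by_cases hv : G.IsMin v
    · simpa only [ρ, if_pos hv] using hσ v
    · simpa only [ρ, if_neg hv] using hτ v
  have hsucc (i : ℕ) : ρ^[i + 1] v = ρ (ρ^[i] v) := Function.iterate_succ_apply' ρ i v
  exact ⟨⟨fun i => ρ^[i] v, fun i => hsucc i ▸ hρ _⟩, rfl,
    fun i hi => (hsucc i).trans (if_pos hi), fun i hi => (hsucc i).trans (if_neg hi)⟩

/-- There are payoffs `f` and a positional strategy profile `ρ` that, from every vertex `v`,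
guarantees at most `f v` when Min follows it and at least `f v` when Max follows it. A profile
prescribes moves at the vertices of both players; each player only uses it at their own. -/
def UniformlyDetermined (G : MPGame V) (val : G.Path → EReal) : Prop :=
  ∃ ρ : V → V, G.Legal ρ ∧ ∃ f : V → EReal,
    (∀ π : G.Path, π.ConsMin ρ → val π ≤ f (π.vert 0)) ∧
    (∀ π : G.Path, π.ConsMax ρ → f (π.vert 0) ≤ val π)

theorem iInf_consMax_le_minVal {τ : V → V} (hτ : G.Legal τ) (val : G.Path → EReal) (v : V) :
    (⨅ π : {π : G.Path // π.vert 0 = v ∧ π.ConsMax τ}, val π.1) ≤ G.minVal val v := by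
  refine le_iInf fun ⟨σ, hσ⟩ => ?_
  obtain ⟨π, hv, hπσ, hπτ⟩ := exists_path_consMin_consMax hσ hτ v
  exact (iInf_le (fun π : {π : G.Path // π.vert 0 = v ∧ π.ConsMax τ} => val π.1)
    ⟨π, hv, hπτ⟩).trans
    (le_iSup (fun π : {π : G.Path // π.vert 0 = v ∧ π.ConsMin σ} => val π.1) ⟨π, hv, hπσ⟩)

theorem minVal_le_iSup_consMin {σ : V → V} (hσ : G.Legal σ) (val : G.Path → EReal) (v : V) :
    G.minVal val v ≤ ⨆ π : {π : G.Path // π.vert 0 = v ∧ π.ConsMin σ}, val π.1 :=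
  iInf_le (fun σ : {σ : V → V // G.Legal σ} =>
    ⨆ π : {π : G.Path // π.vert 0 = v ∧ π.ConsMin σ.1}, val π.1) ⟨σ, hσ⟩

theorem UniformlyDetermined.exists_optimal {val : G.Path → EReal}
    (h : G.UniformlyDetermined val) :
    ∃ σ τ : V → V, G.Legal σ ∧ G.Legal τ ∧ ∀ v : V,
      (⨆ π : {π : G.Path // π.vert 0 = v ∧ π.ConsMin σ}, val π.1) = G.minVal val v ∧
      (⨅ π : {π : G.Path // π.vert 0 = v ∧ π.ConsMax τ}, val π.1) = G.minVal val v := by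
  obtain ⟨ρ, hρ, f, hle, hge⟩ := h
  refine ⟨ρ, ρ, hρ, hρ, fun v => ?_⟩
  have hmin_le := minVal_le_iSup_consMin hρ val v
  have hle_min := iInf_consMax_le_minVal hρ val v
  have hsup_le_inf : (⨆ π : {π : G.Path // π.vert 0 = v ∧ π.ConsMin ρ}, val π.1) ≤
      ⨅ π : {π : G.Path // π.vert 0 = v ∧ π.ConsMax ρ}, val π.1 :=
    (iSup_le fun ⟨π, hv, hπ⟩ => hv ▸ hle π hπ).trans
      (le_iInf fun ⟨π, hv, hπ⟩ => hv ▸ hge π hπ)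
  exact ⟨(hsup_le_inf.trans hle_min).antisymm hmin_le,
    hle_min.antisymm (hmin_le.trans hsup_le_inf)⟩

/-! ### Discounted games -/

section Best

variable [Finite V] {α : Type*} [LinearOrder α]

theorem exists_best (G : MPGame V) (p : V → α) (v : V) :
    ∃ u, G.E v u ∧ (G.IsMin v → ∀ u', G.E v u' → p u ≤ p u') ∧
      (¬ G.IsMin v → ∀ u', G.E v u' → p u' ≤ p u) := by
  by_cases hv : G.IsMin v
  · obtain ⟨u, hu, hle⟩ := Set.exists_min_image {u | G.E v u} p (Set.toFinite _) (G.sinkless v)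
    exact ⟨u, hu, fun _ => hle, fun hv' => absurd hv hv'⟩
  · obtain ⟨u, hu, hle⟩ := Set.exists_max_image {u | G.E v u} p (Set.toFinite _) (G.sinkless v)
    exact ⟨u, hu, fun hv' => absurd hv' hv, fun _ => hle⟩

/-- A successor of `v` that is best for the owner of `v`, when moving to `u` has payoff `p u`. -/
noncomputable def best (G : MPGame V) (p : V → α) (v : V) : V :=
  (G.exists_best p v).choose

theorem best_edge (p : V → α) (v : V) : G.E v (G.best p v) :=
  (G.exists_best p v).choose_spec.1

theorem apply_best_le (p : V → α) {v u : V} (hv : G.IsMin v) (hu : G.E v u) :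
    p (G.best p v) ≤ p u :=
  (G.exists_best p v).choose_spec.2.1 hv u hu

theorem le_apply_best (p : V → α) {v u : V} (hv : ¬ G.IsMin v) (hu : G.E v u) :
    p u ≤ p (G.best p v) :=
  (G.exists_best p v).choose_spec.2.2 hv u hu

end Best

theorem apply_best_le_add [Finite V] {p q : V → ℝ} {r : ℝ} (h : ∀ u, p u ≤ q u + r) (v : V) :
    p (G.best p v) ≤ q (G.best q v) + r := by
  by_cases hv : G.IsMin v
  · exact (apply_best_le p hv (best_edge q v)).trans (h _)
  · exact (h _).trans (by gcongr; exact le_apply_best q hv (best_edge p v))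

theorem dist_apply_best_le [Finite V] {p q : V → ℝ} {r : ℝ} (h : ∀ u, dist (p u) (q u) ≤ r)
    (v : V) : dist (p (G.best p v)) (q (G.best q v)) ≤ r := by
  have hpq := apply_best_le_add (G := G) (p := p) (q := q) (r := r)
    (fun u => by linarith [le_of_abs_le (h u)]) v
  have hqp := apply_best_le_add (G := G) (p := q) (q := p) (r := r)
    (fun u => by linarith [neg_le_of_abs_le (h u)]) v
  exact abs_sub_le_iff.2 ⟨by linarith, by linarith⟩

/-- The payoff of moving from `v` to `u` and collecting `f u` with discount factor `c`. -/
def discountedPayoff (G : MPGame V) (c : ℝ) (f : V → ℝ) (v u : V) : ℝ :=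
  G.w v u + c * f u

/-- The Shapley operator of the `c`-discounted game, modified by a function `φ v` applied to the
optimal payoff at `v`. The identity gives the plain discounted game, and `max 0` gives the game in
which the play may stop at `v` for the payoff `0`. -/
noncomputable def shapley [Finite V] (G : MPGame V) (φ : V → ℝ → ℝ) (c : ℝ) (f : V → ℝ) (v : V) :
    ℝ :=
  φ v (G.discountedPayoff c f v (G.best (G.discountedPayoff c f v) v))

theorem contractingWith_shapley [Fintype V] (G : MPGame V) {φ : V → ℝ → ℝ}
    (hφ : ∀ v, LipschitzWith 1 (φ v)) {K : ℝ≥0} (hK : K < 1) :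
    ContractingWith K (G.shapley φ K) := by
  refine ⟨hK, LipschitzWith.of_dist_le_mul fun f f' => ?_⟩
  refine (dist_pi_le_iff (by positivity)).2 fun v => ?_
  have hpayoff (u : V) :
      dist (G.discountedPayoff K f v u) (G.discountedPayoff K f' v u) ≤ K * dist f f' := by
    rw [discountedPayoff, discountedPayoff, dist_add_left, Real.dist_eq, ← mul_sub, abs_mul,
      NNReal.abs_eq]
    exact mul_le_mul_of_nonneg_left (dist_le_pi_dist f f' u) K.2
  exact ((hφ v).dist_le_mul _ _).trans (by simpa using dist_apply_best_le hpayoff v)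

/-- `f` is a fixed point of `MPGame.shapley φ c`, and the profile `ρ` picks optimal moves for
it. -/
structure IsDiscountedOptimal (G : MPGame V) (φ : V → ℝ → ℝ) (c : ℝ) (f : V → ℝ) (ρ : V → V) :
    Prop where
  legal : G.Legal ρ
  eq_apply : ∀ v, f v = φ v (G.discountedPayoff c f v (ρ v))
  le_apply : ∀ {v u}, G.IsMin v → G.E v u → f v ≤ φ v (G.discountedPayoff c f v u)
  apply_le : ∀ {v u}, ¬ G.IsMin v → G.E v u → φ v (G.discountedPayoff c f v u) ≤ f v

theorem exists_isDiscountedOptimal [Finite V] (G : MPGame V) {φ : V → ℝ → ℝ}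
    (hmono : ∀ v, Monotone (φ v)) (hlip : ∀ v, LipschitzWith 1 (φ v)) {c : ℝ} (hc0 : 0 ≤ c)
    (hc1 : c < 1) :
    ∃ f ρ, G.IsDiscountedOptimal φ c f ρ := by
  cases nonempty_fintype V
  lift c to ℝ≥0 using hc0
  have hcontr := G.contractingWith_shapley hlip (K := c) (by exact_mod_cast hc1)
  obtain ⟨f, hf⟩ : ∃ f, G.shapley φ c f = f := ⟨_, hcontr.fixedPoint_isFixedPt⟩
  have hfix (v : V) : φ v (G.discountedPayoff c f v (G.best (G.discountedPayoff c f v) v)) = f v :=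
    congrFun hf v
  exact ⟨f, fun v => G.best (G.discountedPayoff c f v) v,
    { legal := fun v => best_edge _ v
      eq_apply := fun v => (hfix v).symm
      le_apply := fun hv hu => (hfix _).symm.trans_le (hmono _ (apply_best_le _ hv hu))
      apply_le := fun hv hu => (hmono _ (le_apply_best _ hv hu)).trans_eq (hfix _) }⟩

/-- By the pigeonhole principle, a single profile serves a sequence of discount factors. -/
theorem exists_isDiscountedOptimal_seq [Finite V] (G : MPGame V) {φ : V → ℝ → ℝ}
    (hmono : ∀ v, Monotone (φ v)) (hlip : ∀ v, LipschitzWith 1 (φ v)) :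
    ∃ (ρ : V → V) (c : ℕ → ℝ) (f : ℕ → V → ℝ), (∀ n, c n ∈ Set.Ico 0 1) ∧
      Tendsto c atTop (𝓝 1) ∧ ∀ n, G.IsDiscountedOptimal φ (c n) (f n) ρ := by
  obtain ⟨c, -, hc, hlim⟩ := exists_seq_strictMono_tendsto' (zero_lt_one (α := ℝ))
  choose f ρ hopt using fun n => G.exists_isDiscountedOptimal hmono hlip (hc n).1.le (hc n).2
  obtain ⟨ρ₀, hρ₀⟩ := Finite.exists_infinite_fiber ρ
  obtain ⟨ψ, hψ, hρψ⟩ := extraction_of_frequently_atTop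
    (Nat.frequently_atTop_iff_infinite.2 (Set.infinite_coe_iff.1 hρ₀))
  exact ⟨ρ₀, c ∘ ψ, f ∘ ψ, fun n => ⟨(hc _).1.le, (hc _).2⟩, hlim.comp hψ.tendsto_atTop,
    fun n => (hρψ n : ρ (ψ n) = ρ₀) ▸ hopt (ψ n)⟩

namespace IsDiscountedOptimal

variable {φ : V → ℝ → ℝ} {c : ℝ} {f : V → ℝ} {ρ : V → V} {π : G.Path}

theorem apply_le_of_consMin (h : G.IsDiscountedOptimal φ c f ρ) (hπ : π.ConsMin ρ) (i : ℕ) :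
    φ (π.vert i) (G.discountedPayoff c f (π.vert i) (π.vert (i + 1))) ≤ f (π.vert i) := by
  by_cases hv : G.IsMin (π.vert i)
  · rw [hπ i hv, ← h.eq_apply]
  · exact h.apply_le hv (π.adj i)

theorem le_apply_of_consMax (h : G.IsDiscountedOptimal φ c f ρ) (hπ : π.ConsMax ρ) (i : ℕ) :
    f (π.vert i) ≤ φ (π.vert i) (G.discountedPayoff c f (π.vert i) (π.vert (i + 1))) := by
  by_cases hv : G.IsMin (π.vert i)
  · exact h.le_apply hv (π.adj i)
  · rw [hπ i hv, ← h.eq_apply]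

theorem one_sub_mul_abs_le [Finite V] (h : G.IsDiscountedOptimal φ c f ρ)
    (hφ : ∀ v x, |φ v x| ≤ |x|) (hc : c ∈ Set.Ico 0 1) {W : ℝ} (hW : ∀ v u, |(G.w v u : ℝ)| ≤ W)
    (v : V) : (1 - c) * |f v| ≤ W := by
  have : Nonempty V := ⟨v⟩
  obtain ⟨x, hx⟩ := Finite.exists_max fun v => |f v|
  have hfx : |f x| ≤ W + c * |f x| :=
    calc |f x| ≤ |(G.w x (ρ x) : ℝ) + c * f (ρ x)| := by
          conv_lhs => rw [h.eq_apply x]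
          exact hφ _ _
      _ ≤ |(G.w x (ρ x) : ℝ)| + c * |f (ρ x)| := by
          simpa only [abs_mul, abs_of_nonneg hc.1] using abs_add_le (G.w x (ρ x) : ℝ) (c * f (ρ x))
      _ ≤ W + c * |f x| := add_le_add (hW _ _) (mul_le_mul_of_nonneg_left (hx _) hc.1)
  calc (1 - c) * |f v| ≤ (1 - c) * |f x| := mul_le_mul_of_nonneg_left (hx v) (by linarith [hc.2])
    _ ≤ W := by linarith

end IsDiscountedOptimal

/-! ### Mean payoff -/

theorem tendsto_coe_add_div (a C : ℝ) :
    Tendsto (fun k : ℕ => ((a + C / k : ℝ) : EReal)) atTop (𝓝 a) := by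
  refine continuous_coe_real_ereal.continuousAt.tendsto.comp ?_
  simpa using tendsto_const_nhds.add (tendsto_const_div_atTop_nhds_zero_nat C)

theorem MP_le {π : G.Path} {a : ℝ}
    (h : ∀ b > a, ∃ C : ℝ, ∀ k : ℕ, (π.wsum k : ℝ) ≤ k * b + C) : MP π ≤ a := by
  refine EReal.le_of_forall_lt_iff_le.1 fun b hb => ?_
  obtain ⟨C, hC⟩ := h b (EReal.coe_lt_coe_iff.1 hb)
  rw [← (tendsto_coe_add_div b C).limsup_eq]
  refine limsup_le_limsup ?_
  filter_upwards [eventually_gt_atTop 0] with k hk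
  have hk' : (0 : ℝ) < k := Nat.cast_pos.2 hk
  rw [← EReal.coe_div, EReal.coe_le_coe_iff, div_le_iff₀ hk', add_mul, div_mul_cancel₀ _ hk'.ne']
  linarith [hC k]

theorem le_MP {π : G.Path} {a : ℝ}
    (h : ∀ b < a, ∃ C : ℝ, ∀ k : ℕ, k * b + C ≤ (π.wsum k : ℝ)) : a ≤ MP π := by
  refine EReal.ge_of_forall_gt_iff_ge.1 fun b hb => ?_
  obtain ⟨C, hC⟩ := h b (EReal.coe_lt_coe_iff.1 hb)
  rw [← (tendsto_coe_add_div b C).limsup_eq]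
  refine limsup_le_limsup ?_
  filter_upwards [eventually_gt_atTop 0] with k hk
  have hk' : (0 : ℝ) < k := Nat.cast_pos.2 hk
  rw [← EReal.coe_div, EReal.coe_le_coe_iff, le_div_iff₀ hk', add_mul, div_mul_cancel₀ _ hk'.ne']
  linarith [hC k]

theorem sum_range_le_of_add_mul_le {a F : ℕ → ℝ} {c b : ℝ}
    (h : ∀ i, a i + c * F (i + 1) ≤ F i) (hb : ∀ i, (1 - c) * F i ≤ b) (k : ℕ) :
    ∑ i ∈ Finset.range k, a i ≤ k * b + (F 0 - F k) := by
  induction k with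
  | zero => simp
  | succ k ih =>
    rw [Finset.sum_range_succ]
    push_cast
    linarith [h k, hb (k + 1)]

section VanishingDiscount

variable {c : ℕ → ℝ}

theorem le_of_tendsto_one_sub_mul (hc1 : ∀ n, c n < 1) (hc : Tendsto c atTop (𝓝 1))
    {x y : ℕ → ℝ} {a x₀ y₀ : ℝ} (hx : Tendsto (fun n => (1 - c n) * x n) atTop (𝓝 x₀))
    (hy : Tendsto (fun n => (1 - c n) * y n) atTop (𝓝 y₀)) (h : ∀ n, a + c n * x n ≤ y n) :
    x₀ ≤ y₀ := by
  have hleft : Tendsto (fun n => (1 - c n) * a + c n * ((1 - c n) * x n)) atTop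
      (𝓝 ((1 - 1) * a + 1 * x₀)) :=
    ((tendsto_const_nhds.sub hc).mul_const a).add (hc.mul hx)
  have hle := le_of_tendsto_of_tendsto' hleft hy fun n => by
    linarith [mul_le_mul_of_nonneg_left (h n) (sub_pos.2 (hc1 n)).le]
  simpa using hle

theorem exists_sum_range_le_of_tendsto [Finite V] (hc1 : ∀ n, c n < 1)
    (hc : Tendsto c atTop (𝓝 1)) {f : ℕ → V → ℝ} {g : V → ℝ}
    (hg : ∀ v, Tendsto (fun n => (1 - c n) * f n v) atTop (𝓝 (g v))) {q : ℕ → V} {a : ℕ → ℝ}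
    (h : ∀ n i, a i + c n * f n (q (i + 1)) ≤ f n (q i)) {b : ℝ} (hb : g (q 0) < b) :
    ∃ C : ℝ, ∀ k : ℕ, ∑ i ∈ Finset.range k, a i ≤ k * b + C := by
  have hg_anti : Antitone (g ∘ q) := antitone_nat_of_succ_le fun i =>
    le_of_tendsto_one_sub_mul hc1 hc (hg _) (hg _) fun n => h n i
  obtain ⟨n, hn⟩ : ∃ n, ∀ v, g v < b → (1 - c n) * f n v < b :=
    (eventually_all.2 fun v => eventually_imp_distrib_left.2 (hg v).eventually_lt_const).exists
  obtain ⟨m, hm⟩ := (Set.finite_range (f n)).bddBelow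
  refine ⟨f n (q 0) - m, fun k => (sum_range_le_of_add_mul_le (F := f n ∘ q) (h n)
    (fun i => (hn _ ((hg_anti (Nat.zero_le i)).trans_lt hb)).le) k).trans ?_⟩
  have hmk : m ≤ f n (q k) := hm ⟨q k, rfl⟩
  dsimp only [Function.comp_apply]
  linarith

end VanishingDiscount

theorem exists_tendsto_subseq_one_sub_mul [Finite V] {φ : V → ℝ → ℝ}
    (hφ : ∀ v x, |φ v x| ≤ |x|) {c : ℕ → ℝ} (hc : ∀ n, c n ∈ Set.Ico 0 1) {f : ℕ → V → ℝ}
    {ρ : V → V} (hopt : ∀ n, G.IsDiscountedOptimal φ (c n) (f n) ρ) :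
    ∃ (g : V → ℝ) (ψ : ℕ → ℕ), StrictMono ψ ∧
      ∀ v, Tendsto (fun n => (1 - c (ψ n)) * f (ψ n) v) atTop (𝓝 (g v)) := by
  cases nonempty_fintype V
  obtain ⟨W, hW⟩ := (Set.finite_range fun e : V × V => |(G.w e.1 e.2 : ℝ)|).bddAbove
  have hbound (n : ℕ) (v : V) : (1 - c n) * f n v ∈ Set.Icc (-W) W := by
    rw [Set.mem_Icc, ← abs_le, abs_mul, abs_of_pos (sub_pos.2 (hc n).2)]
    exact (hopt n).one_sub_mul_abs_le hφ (hc n) (fun v u => hW ⟨(v, u), rfl⟩) v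
  obtain ⟨g, -, ψ, hψ, hg⟩ := (isCompact_univ_pi fun _ : V => isCompact_Icc).tendsto_subseq
    (x := fun n v => (1 - c n) * f n v) fun n v _ => hbound n v
  exact ⟨g, ψ, hψ, tendsto_pi_nhds.1 hg⟩

theorem uniformlyDetermined_MP [Finite V] (G : MPGame V) : G.UniformlyDetermined MP := by
  obtain ⟨ρ, c, f, hc, hlim, hopt⟩ :=
    G.exists_isDiscountedOptimal_seq (fun _ => monotone_id) fun _ => LipschitzWith.id
  obtain ⟨g, ψ, hψ, hg⟩ := exists_tendsto_subseq_one_sub_mul (fun _ _ => le_rfl) hc hopt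
  have hc1 (n : ℕ) : c (ψ n) < 1 := (hc _).2
  have hcψ : Tendsto (c ∘ ψ) atTop (𝓝 1) := hlim.comp hψ.tendsto_atTop
  refine ⟨ρ, (hopt 0).legal, fun v => g v, fun π hπ => MP_le fun b hb => ?_,
    fun π hπ => le_MP fun b hb => ?_⟩
  · simp only [Path.cast_wsum]
    exact exists_sum_range_le_of_tendsto hc1 hcψ hg
      (fun n i => (hopt (ψ n)).apply_le_of_consMin hπ i) hb
  · have hneg (v : V) : Tendsto (fun n => (1 - c (ψ n)) * -f (ψ n) v) atTop (𝓝 (-g v)) := by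
      simpa only [mul_neg] using (hg v).neg
    obtain ⟨C, hC⟩ := exists_sum_range_le_of_tendsto hc1 hcψ hneg (q := π.vert)
      (a := fun i => -(G.w (π.vert i) (π.vert (i + 1)) : ℝ)) (fun n i => by
        have hstep : f (ψ n) (π.vert i) ≤
            G.w (π.vert i) (π.vert (i + 1)) + c (ψ n) * f (ψ n) (π.vert (i + 1)) :=
          (hopt (ψ n)).le_apply_of_consMax hπ i
        linarith) (neg_lt_neg hb)
    refine ⟨-C, fun k => ?_⟩
    have hCk := hC k
    rw [Finset.sum_neg_distrib, ← Path.cast_wsum] at hCk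
    linarith

/-! ### Supremum and infimum of the partial sums -/

open Classical in
/-- The modification of the Shapley operator for `supΣ^X`: the play stops in `X`, and may stop
anywhere else. -/
noncomputable def stopOption (X : Set V) (v : V) (x : ℝ) : ℝ := if v ∈ X then 0 else max 0 x

section StopOption

variable {X : Set V} {v : V}

theorem stopOption_of_mem (hv : v ∈ X) (x : ℝ) : stopOption X v x = 0 := if_pos hv

theorem stopOption_of_notMem (hv : v ∉ X) (x : ℝ) : stopOption X v x = max 0 x := if_neg hv

theorem stopOption_nonneg (X : Set V) (v : V) (x : ℝ) : 0 ≤ stopOption X v x := by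
  by_cases hv : v ∈ X
  · exact (stopOption_of_mem hv x).ge
  · exact (le_max_left 0 x).trans_eq (stopOption_of_notMem hv x).symm

theorem monotone_stopOption (X : Set V) (v : V) : Monotone (stopOption X v) := by
  by_cases hv : v ∈ X
  · rw [funext (stopOption_of_mem hv)]
    exact monotone_const
  · rw [funext (stopOption_of_notMem hv)]
    exact monotone_const.max monotone_id

theorem lipschitzWith_stopOption (X : Set V) (v : V) : LipschitzWith 1 (stopOption X v) := by
  by_cases hv : v ∈ X
  · rw [funext (stopOption_of_mem hv)]
    exact LipschitzWith.const' 0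
  · rw [funext (stopOption_of_notMem hv)]
    exact LipschitzWith.id.const_max 0

end StopOption

theorem coe_wsum_le_supSigma {X : Set V} {π : G.Path} {k : ℕ} (hk : ∀ i < k, π.vert i ∉ X) :
    ((π.wsum k : ℝ) : EReal) ≤ supSigma X π :=
  le_iSup (fun k : {k : ℕ // ∀ i < k, π.vert i ∉ X} => ((π.wsum k.1 : ℝ) : EReal)) ⟨k, hk⟩

theorem sum_range_pow_mul_add_le {a F : ℕ → ℝ} {c : ℝ} (hc : 0 ≤ c) {k : ℕ}
    (h : ∀ i < k, a i + c * F (i + 1) ≤ F i) :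
    ∑ i ∈ Finset.range k, c ^ i * a i + c ^ k * F k ≤ F 0 := by
  induction k with
  | zero => simp
  | succ k ih =>
    have hstep := mul_le_mul_of_nonneg_left (h k k.lt_succ_self) (pow_nonneg hc k)
    rw [Finset.sum_range_succ, pow_succ]
    linarith [ih fun i hi => h i (hi.trans k.lt_succ_self)]

theorem nonpos_of_forall_pos_imp_le_mul {p : ℕ → Prop} {h : ℕ → ℝ} {c M : ℝ}
    (hc : c ∈ Set.Ico 0 1) (h0 : p 0)
    (hstep : ∀ k, p k → 0 < h k → p (k + 1) ∧ h k ≤ c * h (k + 1)) (hM : ∀ k, p k → h k ≤ M) :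
    h 0 ≤ 0 := by
  by_contra! hpos
  have hgrow (k : ℕ) : p k ∧ h 0 ≤ c ^ k * h k := by
    induction k with
    | zero => simpa using h0
    | succ k ih =>
      obtain ⟨hk, hle⟩ := ih
      obtain ⟨hk', hle'⟩ :=
        hstep k hk (pos_of_mul_pos_right (hpos.trans_le hle) (pow_nonneg hc.1 k))
      refine ⟨hk', hle.trans ?_⟩
      rw [pow_succ, mul_assoc]
      exact mul_le_mul_of_nonneg_left hle' (pow_nonneg hc.1 k)
  have hbound (k : ℕ) : h 0 ≤ c ^ k * M :=
    (hgrow k).2.trans (mul_le_mul_of_nonneg_left (hM k (hgrow k).1) (pow_nonneg hc.1 k))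
  have hzero : Tendsto (fun k => c ^ k * M) atTop (𝓝 0) := by
    simpa using (tendsto_pow_atTop_nhds_zero_of_lt_one hc.1 hc.2).mul_const M
  exact (ge_of_tendsto' hzero hbound).not_gt hpos

namespace IsDiscountedOptimal

variable {X : Set V} {c : ℝ} {f : V → ℝ} {ρ : V → V} {π : G.Path}

theorem nonneg_of_stopOption (h : G.IsDiscountedOptimal (stopOption X) c f ρ) (v : V) :
    0 ≤ f v :=
  (stopOption_nonneg X v _).trans_eq (h.eq_apply v).symm

theorem discounted_sum_le_of_consMin (h : G.IsDiscountedOptimal (stopOption X) c f ρ)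
    (hc : 0 ≤ c) (hπ : π.ConsMin ρ) {k : ℕ} (hk : ∀ i < k, π.vert i ∉ X) :
    ∑ i ∈ Finset.range k, c ^ i * (G.w (π.vert i) (π.vert (i + 1)) : ℝ) ≤ f (π.vert 0) := by
  refine le_trans (le_add_of_nonneg_right ?_)
    (sum_range_pow_mul_add_le (F := f ∘ π.vert) hc fun i hi => ?_)
  · exact mul_nonneg (pow_nonneg hc k) (h.nonneg_of_stopOption _)
  · have hstep := h.apply_le_of_consMin hπ i
    rw [stopOption_of_notMem (hk i hi)] at hstep
    exact (le_max_right _ _).trans hstep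

theorem notMem_and_le_discountedPayoff_of_pos (h : G.IsDiscountedOptimal (stopOption X) c f ρ)
    (hπ : π.ConsMax ρ) {k : ℕ} (hk : 0 < f (π.vert k)) :
    π.vert k ∉ X ∧ f (π.vert k) ≤ G.discountedPayoff c f (π.vert k) (π.vert (k + 1)) := by
  have hstep := h.le_apply_of_consMax hπ k
  have hkX : π.vert k ∉ X := fun hX => (hstep.trans_eq (stopOption_of_mem hX _)).not_gt hk
  rw [stopOption_of_notMem hkX, le_max_iff, or_iff_right hk.not_ge] at hstep
  exact ⟨hkX, hstep⟩

theorem le_of_consMax_of_forall_wsum_le [Finite V] (h : G.IsDiscountedOptimal (stopOption X) c f ρ)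
    (hc : c ∈ Set.Ico 0 1) (hπ : π.ConsMax ρ) {S : ℝ}
    (hS : ∀ k, (∀ i < k, π.vert i ∉ X) → (π.wsum k : ℝ) ≤ S) : f (π.vert 0) ≤ S := by
  obtain ⟨M, hM⟩ := (Set.finite_range f).bddAbove
  let excess : ℕ → ℝ := fun k => f (π.vert k) - (S - π.wsum k)
  suffices excess 0 ≤ 0 by simpa [excess, Path.wsum_zero] using this
  refine nonpos_of_forall_pos_imp_le_mul (p := fun k => ∀ i < k, π.vert i ∉ X) (M := M) hc
    (fun i hi => absurd hi i.not_lt_zero) (fun k hk hpos => ?_) fun k hk => ?_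
  · have hfk : 0 < f (π.vert k) := hpos.trans_le (sub_le_self _ (sub_nonneg.2 (hS k hk)))
    obtain ⟨hkX, hle⟩ := h.notMem_and_le_discountedPayoff_of_pos hπ hfk
    have hk' : ∀ i < k + 1, π.vert i ∉ X := Nat.forall_lt_succ_right.2 ⟨hk, hkX⟩
    have hslack : 0 ≤ (1 - c) * (S - π.wsum (k + 1)) :=
      mul_nonneg (sub_pos.2 hc.2).le (sub_nonneg.2 (hS _ hk'))
    refine ⟨hk', ?_⟩
    rw [discountedPayoff] at hle
    simp only [excess, Path.wsum_succ, Int.cast_add] at hslack ⊢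
    linarith
  · linarith [hS k hk, hM ⟨π.vert k, rfl⟩]

theorem coe_le_supSigma_of_consMax [Finite V] (h : G.IsDiscountedOptimal (stopOption X) c f ρ)
    (hc : c ∈ Set.Ico 0 1) (hπ : π.ConsMax ρ) : (f (π.vert 0) : EReal) ≤ supSigma X π :=
  EReal.le_of_forall_lt_iff_le.1 fun _S hS => EReal.coe_le_coe_iff.2 <|
    h.le_of_consMax_of_forall_wsum_le hc hπ fun _k hk =>
      EReal.coe_le_coe_iff.1 ((coe_wsum_le_supSigma hk).trans hS.le)

end IsDiscountedOptimal

theorem uniformlyDetermined_supSigma [Finite V] (G : MPGame V) (X : Set V) :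
    G.UniformlyDetermined (supSigma X) := by
  obtain ⟨ρ, c, f, hc, hlim, hopt⟩ :=
    G.exists_isDiscountedOptimal_seq (monotone_stopOption X) (lipschitzWith_stopOption X)
  refine ⟨ρ, (hopt 0).legal, fun v => ⨆ n, (f n v : EReal), fun π hπ => ?_,
    fun π hπ => iSup_le fun n => (hopt n).coe_le_supSigma_of_consMax (hc n) hπ⟩
  refine iSup_le fun ⟨k, hk⟩ => ?_
  have hsum : Tendsto
      (fun n => ∑ i ∈ Finset.range k, c n ^ i * (G.w (π.vert i) (π.vert (i + 1)) : ℝ))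
      atTop (𝓝 (π.wsum k)) := by
    simpa [Path.cast_wsum] using tendsto_finsetSum (Finset.range k) fun i _ =>
      (hlim.pow i).mul_const (G.w (π.vert i) (π.vert (i + 1)) : ℝ)
  refine le_of_tendsto' ((continuous_coe_real_ereal.tendsto _).comp hsum) fun n => ?_
  exact (EReal.coe_le_coe_iff.2 ((hopt n).discounted_sum_le_of_consMin (hc n).1 hπ hk)).trans
    (le_iSup (fun n => (f n (π.vert 0) : EReal)) n)

/-- The game with the roles of the players exchanged and opposite weights, which turns `supΣ^X`
into `-infΣ^X`. -/
def dual (G : MPGame V) : MPGame V where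
  E := G.E
  w v u := -G.w v u
  IsMin v := ¬ G.IsMin v
  sinkless := G.sinkless

/-- A path, viewed in the dual game. -/
def Path.dual (π : G.Path) : G.dual.Path := ⟨π.vert, π.adj⟩

theorem Path.dual_wsum (π : G.Path) (k : ℕ) : π.dual.wsum k = -π.wsum k :=
  Finset.sum_neg_distrib _

theorem supSigma_dual (X : Set V) (π : G.Path) : supSigma X π.dual = -infSigma X π := by
  refine Eq.trans ?_ (EReal.negOrderIso.map_iInf _).symm
  refine iSup_congr fun k => ?_
  rw [Path.dual_wsum, Int.cast_neg, EReal.coe_neg]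
  rfl

theorem UniformlyDetermined.infSigma_of_dual {X : Set V}
    (h : G.dual.UniformlyDetermined (supSigma X)) : G.UniformlyDetermined (infSigma X) := by
  obtain ⟨ρ, hρ, f, hle, hge⟩ := h
  refine ⟨ρ, hρ, fun v => -f v, fun π hπ => EReal.le_neg_of_le_neg ?_,
    fun π hπ => EReal.neg_le_of_neg_le ?_⟩
  · exact supSigma_dual X π ▸ hge π.dual fun i hi => hπ i (not_not.1 hi)
  · exact supSigma_dual X π ▸ hle π.dual hπ

theorem uniformlyDetermined_infSigma [Finite V] (G : MPGame V) (X : Set V) :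
    G.UniformlyDetermined (infSigma X) :=
  (G.dual.uniformlyDetermined_supSigma X).infSigma_of_dual

end MPGame

open MPGame in
theorem statement1_general {V : Type*} [Finite V] (G : MPGame V) (X : Set V)
    (val : G.Path → EReal)
    (hval : val = MPGame.MP ∨ val = MPGame.supSigma X ∨ val = MPGame.infSigma X) :
    ∃ σ τ : V → V, G.Legal σ ∧ G.Legal τ ∧ ∀ v : V,
      (⨆ π : {π : G.Path // π.vert 0 = v ∧ π.ConsMin σ}, val π.1) = G.minVal val v ∧
      (⨅ π : {π : G.Path // π.vert 0 = v ∧ π.ConsMax τ}, val π.1) = G.minVal val v := by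
  refine UniformlyDetermined.exists_optimal ?_
  rcases hval with rfl | rfl | rfl
  · exact G.uniformlyDetermined_MP
  · exact G.uniformlyDetermined_supSigma X
  · exact G.uniformlyDetermined_infSigma X

open MPGame in
/-- in a finite game with no zero cycle, optimal positional
strategies for `val ∈ {MP, supΣ^X, infΣ^X}` can be chosen uniformly in the
starting vertex: there are a single Min-strategy `σ` and a single
Max-strategy `τ` realising the `val`-value of every vertex. -/
theorem statement1 {V : Type*} [Fintype V] (G : MPGame V)
    (hz : G.NoZeroCycle) (X : Set V)
    (val : G.Path → EReal)
    (hval : val = MPGame.MP ∨ val = MPGame.supSigma X ∨ val = MPGame.infSigma X) :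
    ∃ σ τ : V → V, G.Legal σ ∧ G.Legal τ ∧ ∀ v : V,
      (⨆ π : {π : G.Path // π.vert 0 = v ∧ π.ConsMin σ}, val π.1) = G.minVal val v ∧
      (⨅ π : {π : G.Path // π.vert 0 = v ∧ π.ConsMax τ}, val π.1) = G.minVal val v :=
  statement1_general G X val hval
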